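/- arXiv:1909.09642 — 2 statements merged into one kernel-verified Lean document; each statement's English description precedes it below -/
import Mathlib

section
/- Let q = p^f for a prime p and positive integer f. If q - 1 = 2^a for a positive integer a and q + 1 = 2^b * 5^c for nonnegative integers b, c, then q = 3 or q = 9. -/
/-!
If `q - 1 = 2 ^ a` with `a ≥ 2`, then `q + 1 = 2 * (2 ^ (a - 1) + 1)` is twice an odd number, so
`5 ^ c = 2 ^ (a - 1) + 1`. Since `5 ^ 2 ≡ 1 (mod 24)`, this number is `1` or `5` modulo `24`. The
first is impossible because `3` does not divide `2 ^ (a - 1)`; the second says that `2 ^ (a - 1)`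
is `4` modulo `8`, hence equal to `4`.
-/

lemma five_pow_mod_twentyFour (c : ℕ) : 5 ^ c % 24 = 1 ∨ 5 ^ c % 24 = 5 := by
  induction c with
  | zero => simp
  | succ c ih => rw [pow_succ]; omega

lemma not_three_dvd_two_pow (n : ℕ) : ¬ 3 ∣ 2 ^ n := fun h ↦
  absurd (Nat.prime_three.dvd_of_dvd_pow h) (by norm_num)

lemma eq_two_of_two_pow_add_one_mod_twentyFour {n : ℕ}
    (h : (2 ^ n + 1) % 24 = 1 ∨ (2 ^ n + 1) % 24 = 5) : n = 2 := by
  have three_not_dvd : ¬ 3 ∣ 2 ^ n := not_three_dvd_two_pow n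
  have n_lt_three : n < 3 := by
    by_contra! hn
    have eight_dvd : 2 ^ 3 ∣ 2 ^ n := pow_dvd_pow 2 hn
    omega
  interval_cases n
  · norm_num at h
  · norm_num at h
  · rfl

lemma eq_one_of_two_pow_mul_odd_mod_four {b m : ℕ} (hm : Odd m) (h : 2 ^ b * m % 4 = 2) :
    b = 1 := by
  have m_mod_two : m % 2 = 1 := Nat.odd_iff.mp hm
  have b_ne_zero : b ≠ 0 := by
    rintro rfl
    omega
  have b_lt_two : b < 2 := by
    by_contra! hb
    have four_dvd : 2 ^ 2 ∣ 2 ^ b * m := (pow_dvd_pow 2 hb).mul_right m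
    omega
  omega

theorem stmt_1_general {a b m q : ℕ} (hm : m % 24 = 1 ∨ m % 24 = 5)
    (h1 : q - 1 = 2 ^ a) (h2 : q + 1 = 2 ^ b * m) : q = 3 ∨ q = 9 := by
  have m_odd : Odd m := Nat.odd_iff.mpr (by omega)
  have three_not_dvd : ¬ 3 ∣ q + 1 := by
    rw [h2, Nat.prime_three.dvd_mul, not_or]
    exact ⟨not_three_dvd_two_pow b, by omega⟩
  rcases a with _ | _ | n
  · omega
  · left; omega
  · right
    have q_sub_one : q - 1 = 2 * 2 ^ (n + 1) := h1.trans (pow_succ' 2 (n + 1))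
    have two_pow_succ : 2 ^ (n + 1) = 2 * 2 ^ n := pow_succ' 2 n
    have two_pow_pos : 0 < 2 ^ n := by positivity
    obtain rfl : b = 1 := eq_one_of_two_pow_mul_odd_mod_four m_odd (by omega)
    obtain rfl : m = 2 ^ (n + 1) + 1 := by omega
    obtain rfl : n = 1 := Nat.succ.inj (eq_two_of_two_pow_add_one_mod_twentyFour hm)
    omega

theorem stmt_1 (p f a b c q : ℕ) (hp : p.Prime) (hf : 1 ≤ f) (hq : q = p ^ f)
    (ha : 1 ≤ a) (h1 : q - 1 = 2 ^ a) (h2 : q + 1 = 2 ^ b * 5 ^ c) :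
    q = 3 ∨ q = 9 :=
  stmt_1_general (five_pow_mod_twentyFour c) h1 h2
end

section
/- If f and a are positive integers with 2^a - 1 = 3^f, then f = 1 (so the only solution is 2^2 - 1 = 3). -/
/-!
The base `3` may be replaced by any `x > 1`. If `n > 0` is even, then `x ^ n + 1 > 2` is not
divisible by `4`, so it is not a power of two. If `n` is odd and `x ^ n + 1` is a power of two, then
`x` is odd and `(x ^ n + 1) / (x + 1)` is a sum of `n` odd terms, hence odd. So the whole power of
two already divides `x + 1`, which forces `n = 1`.
-/

theorem emultiplicity_pow_add_pow_of_prime {R : Type*} [CommRing R] [IsDomain R] {p x y : R}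
    (hp : Prime p) (hxy : p ∣ x + y) (hx : ¬p ∣ x) {n : ℕ} (hn : Odd n) (hpn : ¬p ∣ n) :
    emultiplicity p (x ^ n + y ^ n) = emultiplicity p (x + y) := by
  rw [← sub_neg_eq_add] at hxy
  rw [← sub_neg_eq_add, ← sub_neg_eq_add, ← hn.neg_pow]
  exact emultiplicity_pow_sub_pow_of_prime hp hxy hx hpn

theorem emultiplicity_two_pow_add_pow_of_odd {x y : ℤ} {n : ℕ} (hx : Odd x)
    (hy : Odd y) (hn : Odd n) : emultiplicity 2 (x ^ n + y ^ n) = emultiplicity 2 (x + y) :=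
  emultiplicity_pow_add_pow_of_prime Int.prime_two (hx.add_odd hy).two_dvd
    (Int.two_dvd_ne_zero.mpr (Int.odd_iff.mp hx)) hn (mod_cast hn.not_two_dvd_nat)

theorem two_pow_dvd_pow_add_one_iff {x n : ℕ} (hx : Odd x) (hn : Odd n) (a : ℕ) :
    2 ^ a ∣ x ^ n + 1 ↔ 2 ^ a ∣ x + 1 := by
  have h_emultiplicity := emultiplicity_two_pow_add_pow_of_odd (hx.natCast (R := ℤ)) odd_one hn
  rw [one_pow] at h_emultiplicity
  have h_int : (2 : ℤ) ^ a ∣ (x : ℤ) ^ n + 1 ↔ (2 : ℤ) ^ a ∣ (x : ℤ) + 1 := by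
    rw [pow_dvd_iff_le_emultiplicity, pow_dvd_iff_le_emultiplicity, h_emultiplicity]
  exact_mod_cast h_int

theorem not_four_dvd_pow_add_one_of_even {n : ℕ} (hn : Even n) (x : ℕ) : ¬4 ∣ x ^ n + 1 := by
  obtain ⟨k, rfl⟩ := hn
  have neg_one_not_square : ∀ z : ZMod 4, z * z + 1 ≠ 0 := by decide
  intro h
  rw [← ZMod.natCast_eq_zero_iff, pow_add] at h
  exact neg_one_not_square (x ^ k : ℕ) (mod_cast h)

theorem two_pow_ne_pow_add_one_of_even {x n : ℕ} (hx : 1 < x) (hn : Even n) (hn₀ : n ≠ 0)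
    (a : ℕ) : 2 ^ a ≠ x ^ n + 1 := by
  intro h
  have h_pow : 1 < x ^ n := Nat.one_lt_pow hn₀ hx
  have ha : 2 ≤ a := by
    by_contra! ha
    interval_cases a <;> omega
  exact not_four_dvd_pow_add_one_of_even hn x (h ▸ pow_dvd_pow 2 ha)

theorem odd_of_two_pow_eq_pow_add_one {x n a : ℕ} (hx : x ≠ 0) (hn : n ≠ 0)
    (h : 2 ^ a = x ^ n + 1) : Odd x := by
  have ha : a ≠ 0 := by
    rintro rfl
    exact pow_ne_zero n hx (by omega)
  have h_even : Even (x ^ n + 1) := h ▸ even_two.pow_of_ne_zero ha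
  have h_odd : Odd (x ^ n) := Nat.not_even_iff_odd.mp (Nat.even_add_one.mp h_even)
  exact (Nat.odd_pow_iff hn).mp h_odd

theorem stmt_6_general {x f a : ℕ} (hx : 1 < x) (hf : 1 ≤ f) (h : 2 ^ a - 1 = x ^ f) :
    f = 1 := by
  have hf₀ : f ≠ 0 := by omega
  have h_eq : 2 ^ a = x ^ f + 1 := by
    have := Nat.one_le_two_pow (n := a)
    omega
  have hx_odd : Odd x := odd_of_two_pow_eq_pow_add_one (by omega) hf₀ h_eq
  have hf_odd : Odd f := Nat.not_even_iff_odd.mp fun hf_even ↦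
    two_pow_ne_pow_add_one_of_even hx hf_even hf₀ a h_eq
  have h_dvd : x ^ f + 1 ∣ x + 1 :=
    h_eq ▸ (two_pow_dvd_pow_add_one_iff hx_odd hf_odd a).mp h_eq.dvd
  have h_le : x ^ f ≤ x ^ 1 := by simpa using Nat.le_of_dvd x.succ_pos h_dvd
  exact le_antisymm ((Nat.pow_le_pow_iff_right hx).mp h_le) hf

theorem stmt_6 (f a : ℕ) (hf : 1 ≤ f) (ha : 1 ≤ a) (h : 2 ^ a - 1 = 3 ^ f) :
    f = 1 :=
  stmt_6_general (by norm_num) hf h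
end
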